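/- For s ≥ 3 and n ≥ 2, every n-coloring of the pairs of [N] with N ≥ 2^{5^s · s! · (log n)^{s-2}} contains a non-increasing set of size s; that is, f(s; n) ≤ 2^{5^s s! (log n)^{s-2}}. -/

import Mathlib

/-- A triple `u < v < w` is non-increasing with respect to `χ` if
`χ(u,v) = χ(u,w) ≥ χ(v,w)` or `χ(u,v) ≥ χ(v,w) = χ(u,w)`. -/
def NonIncTriple (χ : ℕ → ℕ → ℕ) (u v w : ℕ) : Prop :=
  (χ u v = χ u w ∧ χ v w ≤ χ u w) ∨ (χ v w = χ u w ∧ χ v w ≤ χ u v)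

/-!
Let `T` contain no non-increasing `(p + 1)`-set with colors in an interval `C`. If all pairs `x < w`
with `x` in some `A ⊆ T` have the same color `b ∈ C`, then `A` contains no non-increasing `p`-set
with colors `≥ b` in `C`, since `w` could be added to it; dually for pairs `u < x` and colors `≤ b`.
So if colors `≤ m` are dense in `T`, a popular vertex `w` yields a large subset on which, after
pigeonholing the color of the pairs `x < w`, the colors `≥ m` are `p`-free; and dually. A binary
search over `C` with `log |C|` such steps leaves only a lower and an upper interval of colors, both
essentially `p`-free, and one more step makes all of `C` a union of two `p`-free intervals.

The density of `C` may get lost when passing to subsets. This is why freeness is turned into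
*clearability*, where one pays (by shrinking the set) only when the colors in question are
currently dense: the budgets for two color sets add up to a budget for their union. The budget
satisfies `K (p + 1) = O(log n) + 2 * K p`, while the color set `{1, ..., n}` stays dense as long as
two vertices are left. Hence `f(s; n)` is polynomial in `n` for fixed `s`.
-/

open Finset

section Clearable

variable {α β : Type*} {D D₁ D₂ : Finset α → Prop} {j k l m : ℕ} {S T : Finset α}

/-- `T` is clearable of the property `D` with budget `k`: whenever some `T' ⊆ T` satisfies `D`, one
can pass to a subset of `T'` which is smaller by a factor of at most `2 ^ c`, for some `c > 0`, and
is clearable with a budget lowered by at least `c`. In particular, budget `0` means that no subset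
of `T` satisfies `D`. The bound on `j` is a binder so that the termination check sees it. -/
def Clearable (D : Finset α → Prop) (k : ℕ) (T : Finset α) : Prop :=
  ∀ T' ⊆ T, D T' → ∃ c j, ∃ _ : 0 < c ∧ c + j ≤ k,
    ∃ T'' ⊆ T', #T' ≤ 2 ^ c * #T'' ∧ Clearable D j T''
termination_by k

lemma clearable_iff : Clearable D k T ↔ ∀ T' ⊆ T, D T' → ∃ c j, (0 < c ∧ c + j ≤ k) ∧
    ∃ T'' ⊆ T', #T' ≤ 2 ^ c * #T'' ∧ Clearable D j T'' := by
  rw [Clearable]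
  simp only [exists_prop]

lemma Clearable.subset (h : Clearable D k T) (hST : S ⊆ T) : Clearable D k S := by
  rw [clearable_iff] at h ⊢
  exact fun T' hT' => h T' (hT'.trans hST)

lemma Clearable.mono_budget (h : Clearable D j T) (hjk : j ≤ k) : Clearable D k T := by
  rw [clearable_iff] at h ⊢
  intro T' hT' hD
  obtain ⟨c, i, hci, hT''⟩ := h T' hT' hD
  exact ⟨c, i, ⟨hci.1, hci.2.trans hjk⟩, hT''⟩

lemma clearable_of_forall_not (h : ∀ T' ⊆ T, ¬ D T') : Clearable D k T := by
  rw [clearable_iff]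
  exact fun T' hT' hD => absurd hD (h T' hT')

lemma Clearable.or (h₁ : Clearable D₁ j T) (h₂ : Clearable D₂ k T)
    (hD : ∀ T', D T' → D₁ T' ∨ D₂ T') : Clearable D (j + k) T := by
  induction hn : j + k using Nat.strong_induction_on generalizing j k T with
  | _ n ih =>
    rw [clearable_iff]
    intro T' hT' hDT'
    rcases hD T' hDT' with hDT' | hDT'
    · obtain ⟨c, i, hci, T'', hT'', hcard, h⟩ := clearable_iff.1 h₁ T' hT' hDT'
      exact ⟨c, i + k, by omega, T'', hT'', hcard,
        ih (i + k) (by omega) h (h₂.subset (hT''.trans hT')) rfl⟩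
    · obtain ⟨c, i, hci, T'', hT'', hcard, h⟩ := clearable_iff.1 h₂ T' hT' hDT'
      exact ⟨c, j + i, by omega, T'', hT'', hcard,
        ih (j + i) (by omega) (h₁.subset (hT''.trans hT')) h rfl⟩

lemma exists_card_le_mul_card_fiber [DecidableEq β] {f : α → β} {s : Finset α} {t : Finset β}
    (hf : ∀ x ∈ s, f x ∈ t) (ht : t.Nonempty) :
    ∃ y ∈ t, #s ≤ #t * #{x ∈ s | f x = y} := by
  obtain ⟨y, hy, hmax⟩ := t.exists_max_image (fun y => #{x ∈ s | f x = y}) ht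
  exact ⟨y, hy, mul_comm #t _ ▸ card_le_mul_card_image_of_maps_to hf _ hmax⟩

lemma clearable_of_fibers [DecidableEq β] {f : α → β} {t : Finset β} (hf : ∀ x ∈ T, f x ∈ t)
    (ht : t.Nonempty) (hl : #t < 2 ^ l) (h : ∀ y ∈ t, Clearable D k {x ∈ T | f x = y}) :
    Clearable D (l + k) T := by
  rw [clearable_iff]
  intro T' hT' _
  obtain ⟨y, hy, hcard⟩ := exists_card_le_mul_card_fiber (fun x hx => hf x (hT' hx)) ht
  have hl₀ : l ≠ 0 := by
    rintro rfl
    exact ht.card_pos.ne' (by simpa using hl)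
  exact ⟨l, k, ⟨hl₀.bot_lt, le_rfl⟩, _, filter_subset _ _,
    hcard.trans (Nat.mul_le_mul_right _ hl.le), (h y hy).subset (filter_subset_filter _ hT')⟩

lemma Clearable.card_lt (h : Clearable D k T) (hD : ∀ T' ⊆ T, m ≤ #T' → D T') :
    #T < m * 2 ^ k := by
  induction k using Nat.strong_induction_on generalizing T with
  | _ k ih =>
    by_contra! hT
    have hmT : m ≤ #T := (Nat.le_mul_of_pos_right m (by positivity)).trans hT
    obtain ⟨c, j, hcj, S, hS, hcard, hclear⟩ := clearable_iff.1 h T subset_rfl (hD T subset_rfl hmT)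
    have hlt : #T < m * 2 ^ k := calc
      #T ≤ 2 ^ c * #S := hcard
      _ < 2 ^ c * (m * 2 ^ j) := by
        gcongr
        exact ih j (by omega) hclear fun T' hT' => hD T' (hT'.trans hS)
      _ = m * 2 ^ (c + j) := by ring
      _ ≤ m * 2 ^ k := by gcongr; exacts [one_le_two, hcj.2]
    exact hlt.not_ge hT

end Clearable

section Coloring

variable {χ : ℕ → ℕ → ℕ} {a e e' k l p u w : ℕ} {C C' C₁ C₂ S T : Finset ℕ}

/-- `S` is a non-increasing set all of whose pairs have colors in `C`. -/
structure NonIncSet (χ : ℕ → ℕ → ℕ) (C S : Finset ℕ) : Prop where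
  color_mem : ∀ u ∈ S, ∀ v ∈ S, u < v → χ u v ∈ C
  nonIncTriple : ∀ u ∈ S, ∀ v ∈ S, ∀ w ∈ S, u < v → v < w → NonIncTriple χ u v w

lemma NonIncSet.insert_lt (h : NonIncSet χ C S) (hu : ∀ x ∈ S, u < x ∧ χ u x = a)
    (ha : a ∈ C') (hC : ∀ c ∈ C, c ∈ C' ∧ c ≤ a) : NonIncSet χ C' (insert u S) := by
  have := h.color_mem
  have := h.nonIncTriple
  constructor
  · grind
  · grind [NonIncTriple]

lemma NonIncSet.insert_gt (h : NonIncSet χ C S) (hw : ∀ x ∈ S, x < w ∧ χ x w = a)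
    (ha : a ∈ C') (hC : ∀ c ∈ C, c ∈ C' ∧ a ≤ c) : NonIncSet χ C' (insert w S) := by
  have := h.color_mem
  have := h.nonIncTriple
  constructor
  · grind
  · grind [NonIncTriple]

/-- `T` contains no non-increasing set of size `p` with colors in `C`. -/
def NonIncFree (χ : ℕ → ℕ → ℕ) (p : ℕ) (C T : Finset ℕ) : Prop :=
  ∀ S ⊆ T, #S = p → ¬ NonIncSet χ C S

lemma NonIncFree.subset (h : NonIncFree χ p C T) (hST : S ⊆ T) : NonIncFree χ p C S :=
  fun R hR => h R (hR.trans hST)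

lemma not_nonIncFree_zero : ¬ NonIncFree χ 0 C T :=
  fun h => h ∅ (empty_subset T) card_empty ⟨by simp, by simp⟩

lemma NonIncFree.of_forall_gt (h : NonIncFree χ (p + 1) C T) (hu : u ∈ T) (hST : S ⊆ T)
    (hS : ∀ x ∈ S, u < x ∧ χ u x = a) (ha : a ∈ C) (hC : ∀ c ∈ C', c ∈ C ∧ c ≤ a) :
    NonIncFree χ p C' S := by
  intro R hR hcard hinc
  have huR : u ∉ R := fun hmem => (hS u (hR hmem)).1.false
  exact h (insert u R) (insert_subset hu (hR.trans hST)) (by rw [card_insert_of_notMem huR, hcard])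
    (hinc.insert_lt (fun x hx => hS x (hR hx)) ha hC)

lemma NonIncFree.of_forall_lt (h : NonIncFree χ (p + 1) C T) (hw : w ∈ T) (hST : S ⊆ T)
    (hS : ∀ x ∈ S, x < w ∧ χ x w = a) (ha : a ∈ C) (hC : ∀ c ∈ C', c ∈ C ∧ a ≤ c) :
    NonIncFree χ p C' S := by
  intro R hR hcard hinc
  have hwR : w ∉ R := fun hmem => (hS w (hR hmem)).1.false
  exact h (insert w R) (insert_subset hw (hR.trans hST)) (by rw [card_insert_of_notMem hwR, hcard])
    (hinc.insert_gt (fun x hx => hS x (hR hx)) ha hC)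

/-- The pairs `u < v` in `T` with color in `C`. -/
def coloredPairs (χ : ℕ → ℕ → ℕ) (C T : Finset ℕ) : Finset (ℕ × ℕ) :=
  {x ∈ T ×ˢ T | x.1 < x.2 ∧ χ x.1 x.2 ∈ C}

/-- The pairs with color in `C` have density at least `2 ^ (-e)` among all of `T × T`. The empty
set is excluded, as the inequality holds trivially there. -/
def ColorDense (χ : ℕ → ℕ → ℕ) (e : ℕ) (C T : Finset ℕ) : Prop :=
  T.Nonempty ∧ #T ^ 2 ≤ 2 ^ e * #(coloredPairs χ C T)

lemma ColorDense.mono (h : ColorDense χ e C T) (he : e ≤ e') (hC : C ⊆ C') :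
    ColorDense χ e' C' T := by
  refine ⟨h.1, h.2.trans (Nat.mul_le_mul (by gcongr; exact one_le_two) (card_le_card ?_))⟩
  exact monotone_filter_right _ fun x _ hx => ⟨hx.1, hC hx.2⟩

lemma ColorDense.colors_nonempty (h : ColorDense χ e C T) : C.Nonempty := by
  by_contra! hC
  have := h.1.card_pos
  have := h.2
  simp_all [coloredPairs]

lemma ColorDense.or (h : ColorDense χ e C T) (hC : C ⊆ C₁ ∪ C₂) :
    ColorDense χ (e + 1) C₁ T ∨ ColorDense χ (e + 1) C₂ T := by
  have hpairs : coloredPairs χ C T ⊆ coloredPairs χ C₁ T ∪ coloredPairs χ C₂ T := by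
    simp only [coloredPairs, ← filter_or, ← and_or_left, ← mem_union]
    exact monotone_filter_right _ fun x _ hx => ⟨hx.1, hC hx.2⟩
  have hcard := (card_le_card hpairs).trans (card_union_le _ _)
  have hmul := h.2.trans (Nat.mul_le_mul_left (2 ^ e) hcard)
  by_contra! hsparse
  simp only [ColorDense, h.1, true_and, not_le, pow_succ] at hsparse
  linarith

lemma exists_card_le_mul_card_of_sum {α : Type*} {s : Finset α} {c : ℕ} {f : α → ℕ}
    (hs : s.Nonempty) (h : #s ^ 2 ≤ c * ∑ x ∈ s, f x) : ∃ x ∈ s, #s ≤ c * f x := by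
  refine exists_le_of_sum_le hs ?_
  rwa [sum_const, smul_eq_mul, ← sq, ← mul_sum]

lemma ColorDense.exists_left (h : ColorDense χ e C T) :
    ∃ u ∈ T, #T ≤ 2 ^ e * #{x ∈ T | u < x ∧ χ u x ∈ C} := by
  refine exists_card_le_mul_card_of_sum h.1 (h.2.trans_eq ?_)
  simp only [coloredPairs, card_filter, sum_product]

lemma ColorDense.exists_right (h : ColorDense χ e C T) :
    ∃ w ∈ T, #T ≤ 2 ^ e * #{x ∈ T | x < w ∧ χ x w ∈ C} := by
  refine exists_card_le_mul_card_of_sum h.1 (h.2.trans_eq ?_)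
  simp only [coloredPairs, card_filter, sum_product_right]

lemma ColorDense.exists_clearable_below (hdense : ColorDense χ e C₂ T)
    (hfree : NonIncFree χ (p + 1) C T) (hC₁ : C₁ ⊆ C) (hC₂ : C₂ ⊆ C)
    (hle : ∀ x ∈ C₁, ∀ y ∈ C₂, x ≤ y) (hl : #C₂ < 2 ^ l)
    (hclear : ∀ A, NonIncFree χ p C₁ A → Clearable (ColorDense χ e' C₁) k A) :
    ∃ H ⊆ T, #T ≤ 2 ^ e * #H ∧ Clearable (ColorDense χ e' C₁) (l + k) H := by
  obtain ⟨u, hu, hcard⟩ := hdense.exists_left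
  refine ⟨_, filter_subset _ _, hcard, clearable_of_fibers (f := χ u) (t := C₂)
    (fun x hx => (mem_filter.1 hx).2.2) hdense.colors_nonempty hl fun a ha => hclear _ ?_⟩
  refine hfree.of_forall_gt hu ((filter_subset _ _).trans (filter_subset _ _)) (a := a)
    (fun x hx => ?_) (hC₂ ha) fun c hc => ⟨hC₁ hc, hle c hc a ha⟩
  simp only [mem_filter] at hx
  exact ⟨hx.1.2.1, hx.2⟩

lemma ColorDense.exists_clearable_above (hdense : ColorDense χ e C₁ T)
    (hfree : NonIncFree χ (p + 1) C T) (hC₁ : C₁ ⊆ C) (hC₂ : C₂ ⊆ C)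
    (hle : ∀ x ∈ C₁, ∀ y ∈ C₂, x ≤ y) (hl : #C₁ < 2 ^ l)
    (hclear : ∀ A, NonIncFree χ p C₂ A → Clearable (ColorDense χ e' C₂) k A) :
    ∃ H ⊆ T, #T ≤ 2 ^ e * #H ∧ Clearable (ColorDense χ e' C₂) (l + k) H := by
  obtain ⟨w, hw, hcard⟩ := hdense.exists_right
  refine ⟨_, filter_subset _ _, hcard, clearable_of_fibers (f := (χ · w)) (t := C₁)
    (fun x hx => (mem_filter.1 hx).2.2) hdense.colors_nonempty hl fun a ha => hclear _ ?_⟩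
  refine hfree.of_forall_lt hw ((filter_subset _ _).trans (filter_subset _ _)) (a := a)
    (fun x hx => ?_) (hC₁ ha) fun c hc => ⟨hC₂ hc, hle a ha c hc⟩
  simp only [mem_filter] at hx
  exact ⟨hx.1.2.1, hx.2⟩

lemma ColorDense.or_Ico {lo hi : ℕ} (h : ColorDense χ e (Ico lo hi) T) (c : ℕ) :
    ColorDense χ (e + 1) (Ico lo c) T ∨ ColorDense χ (e + 1) (Ico c hi) T :=
  h.or Ico_subset_Ico_union_Ico

section Interval

variable {lo c d hi m : ℕ} (hl : #(Ico lo hi) < 2 ^ l) (hfree : NonIncFree χ (p + 1) (Ico lo hi) T)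
  (hclear : ∀ a b A, lo ≤ a → a ≤ b → b ≤ hi → NonIncFree χ p (Ico a b) A →
    Clearable (ColorDense χ (e + 2) (Ico a b)) k A)
  (hlow : Clearable (ColorDense χ (e + 2) (Ico lo c)) (l + k) T)
  (hhigh : Clearable (ColorDense χ (e + 2) (Ico d hi)) (l + k) T)
include hl hfree hclear hlow hhigh

lemma clearable_of_middle (hc : lo ≤ c) (hcd : c ≤ d) (hd : d ≤ hi) (hm : 2 * (l + k) ≤ m)
    (hmid : ∀ T' ⊆ T, ColorDense χ (e + 2) (Ico c d) T' →
      ∃ H ⊆ T', #T' ≤ 2 ^ (e + 3) * #H ∧ Clearable (ColorDense χ e (Ico lo hi)) m H) :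
    Clearable (ColorDense χ e (Ico lo hi)) (e + 3 + m) T := by
  have of_halves : ∀ a H, Clearable (ColorDense χ (e + 2) (Ico lo a)) (l + k) H →
      Clearable (ColorDense χ (e + 2) (Ico a hi)) (l + k) H →
      Clearable (ColorDense χ e (Ico lo hi)) m H := fun a H hlo hhi =>
    (hlo.or hhi fun S hS => ((hS.mono e.le_succ subset_rfl).or_Ico a)).mono_budget (by omega)
  rw [clearable_iff]
  intro T' hT' hdense
  suffices h : ∃ H ⊆ T', #T' ≤ 2 ^ (e + 3) * #H ∧
      Clearable (ColorDense χ e (Ico lo hi)) m H from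
    ⟨e + 3, m, ⟨by omega, le_rfl⟩, h⟩
  rcases hdense.or_Ico c with hdense | hdense
  · obtain ⟨H, hH, hcard, hhigh'⟩ :=
      (hdense.mono (e' := e + 3) (by omega) subset_rfl).exists_clearable_above
        (hfree.subset hT') (Ico_subset_Ico_right (hcd.trans hd)) (Ico_subset_Ico_left hc)
        (by simp only [mem_Ico]; omega)
        ((card_le_card (Ico_subset_Ico_right (hcd.trans hd))).trans_lt hl)
        (fun A => hclear c hi A hc (hcd.trans hd) le_rfl)
    exact ⟨H, hH, hcard, of_halves c H (hlow.subset (hH.trans hT')) hhigh'⟩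
  rcases hdense.or_Ico d with hdense | hdense
  · exact hmid T' hT' hdense
  · obtain ⟨H, hH, hcard, hlow'⟩ :=
      (hdense.mono (e' := e + 3) (by omega) subset_rfl).exists_clearable_below
        (hfree.subset hT') (Ico_subset_Ico_right hd) (Ico_subset_Ico_left (hc.trans hcd))
        (by simp only [mem_Ico]; omega)
        ((card_le_card (Ico_subset_Ico_left (hc.trans hcd))).trans_lt hl)
        (fun A => hclear lo d A le_rfl (hc.trans hcd) hd)
    exact ⟨H, hH, hcard, of_halves d H hlow' (hhigh.subset (hH.trans hT'))⟩

lemma clearable_of_outer_clearable (hc : lo ≤ c) (hcd : c ≤ d) (hd : d ≤ hi) {j : ℕ}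
    (hj : d - c < 2 ^ j) :
    Clearable (ColorDense χ e (Ico lo hi)) ((j + 1) * (e + 3) + 2 * (l + k)) T := by
  induction j generalizing c d T with
  | zero =>
    rw [zero_add, one_mul]
    refine clearable_of_middle hl hfree hclear hlow hhigh hc hcd hd le_rfl fun T' _ hdense => ?_
    have := nonempty_Ico.1 hdense.colors_nonempty
    omega
  | succ j ih =>
    rw [add_one_mul (j + 1), add_comm _ (e + 3), add_assoc]
    refine clearable_of_middle hl hfree hclear hlow hhigh hc hcd hd (by omega) ?_
    intro T' hT' hdense
    have hcd' := nonempty_Ico.1 hdense.colors_nonempty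
    obtain ⟨m, hcm, hmd, hleft, hright⟩ :
        ∃ m, c ≤ m ∧ m + 1 ≤ d ∧ m - c < 2 ^ j ∧ d - (m + 1) < 2 ^ j :=
      ⟨(c + d) / 2, by omega⟩
    rcases hdense.or_Ico (m + 1) with hdense | hdense
    · have hsub : Ico c (m + 1) ⊆ Ico lo hi := Ico_subset_Ico hc (hmd.trans hd)
      obtain ⟨H, hH, hcard, hhigh'⟩ := hdense.exists_clearable_above
        (hfree.subset hT') hsub (Ico_subset_Ico_left (hc.trans hcm))
        (by simp only [mem_Ico]; omega) ((card_le_card hsub).trans_lt hl)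
        (fun A => hclear m hi A (by omega) (by omega) le_rfl)
      have hHT := hH.trans hT'
      exact ⟨H, hH, hcard, ih (hfree.subset hHT) (hlow.subset hHT) hhigh' hc hcm (by omega) hleft⟩
    · have hsub : Ico (m + 1) d ⊆ Ico lo hi := Ico_subset_Ico (by omega) hd
      obtain ⟨H, hH, hcard, hlow'⟩ := hdense.exists_clearable_below
        (hfree.subset hT') (Ico_subset_Ico_right (hmd.trans hd)) hsub
        (by simp only [mem_Ico]; omega) ((card_le_card hsub).trans_lt hl)
        (fun A => hclear lo (m + 1) A le_rfl (by omega) (by omega))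
      have hHT := hH.trans hT'
      exact ⟨H, hH, hcard, ih (hfree.subset hHT) hlow' (hhigh.subset hHT) (by omega) hmd hd hright⟩

end Interval

/-- The budget with which a coloring by fewer than `2 ^ l` colors without non-increasing `p`-sets
is clearable of sets of density `2 ^ (-e)`. -/
def clearingBudget (l : ℕ) : ℕ → ℕ → ℕ
  | 0, _ => 0
  | p + 1, e => (l + 1) * (e + 3) + 2 * (l + clearingBudget l p (e + 2))

lemma clearable_of_nonIncFree {lo hi : ℕ} (hlohi : lo ≤ hi) (hl : #(Ico lo hi) < 2 ^ l)
    (hfree : NonIncFree χ p (Ico lo hi) T) :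
    Clearable (ColorDense χ e (Ico lo hi)) (clearingBudget l p e) T := by
  induction p generalizing e lo hi T with
  | zero => exact absurd hfree not_nonIncFree_zero
  | succ p ih =>
    have hempty : ∀ a, ∀ T' ⊆ T, ¬ ColorDense χ (e + 2) (Ico a a) T' :=
      fun a T' _ h => by simpa using h.colors_nonempty
    exact clearable_of_outer_clearable hl hfree
      (fun a b A ha hab hb => ih hab ((card_le_card (Ico_subset_Ico ha hb)).trans_lt hl))
      (clearable_of_forall_not (hempty lo)) (clearable_of_forall_not (hempty hi))
      le_rfl hlohi le_rfl (by simpa using hl)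

lemma clearingBudget_add_le (hl : 0 < l) :
    clearingBudget l p e + 2 * e * l ≤ 2 ^ p * (2 * e + 4 * p) * l := by
  induction p generalizing e with
  | zero => simp [clearingBudget]
  | succ p ih =>
    have hle : e + 3 ≤ l * (e + 3) := Nat.le_mul_of_pos_left _ hl
    calc clearingBudget l (p + 1) e + 2 * e * l
        ≤ 2 * (clearingBudget l p (e + 2) + 2 * (e + 2) * l) := by
          simp only [clearingBudget]
          nlinarith
      _ ≤ 2 * (2 ^ p * (2 * (e + 2) + 4 * p) * l) := by gcongr; exact ih
      _ = 2 ^ (p + 1) * (2 * e + 4 * (p + 1)) * l := by ring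

lemma colorDense_two_of_forall_mem (hcol : ∀ u ∈ T, ∀ v ∈ T, u < v → χ u v ∈ C) (hT : 2 ≤ #T) :
    ColorDense χ 2 C T := by
  have hoff : T.offDiag ⊆ coloredPairs χ C T ∪ (coloredPairs χ C T).image Prod.swap := by
    rintro ⟨u, v⟩ huv
    obtain ⟨hu, hv, hne⟩ := mem_offDiag.1 huv
    rcases hne.lt_or_gt with h | h <;> simp [coloredPairs, hu, hv, h, hcol]
  have hcard := (card_le_card hoff).trans (card_union_le _ _)
  have hswap : #((coloredPairs χ C T).image Prod.swap) ≤ #(coloredPairs χ C T) := card_image_le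
  rw [offDiag_card] at hcard
  refine ⟨card_pos.1 (by omega), ?_⟩
  have : 2 * #T ≤ #T * #T := Nat.mul_le_mul_right _ hT
  rw [sq]
  omega

end Coloring

lemma exists_nonIncSet {χ : ℕ → ℕ → ℕ} {T : Finset ℕ} {l s lo hi : ℕ} (hl : 0 < l)
    (hlohi : lo ≤ hi) (hcard : #(Ico lo hi) < 2 ^ l)
    (hcol : ∀ u ∈ T, ∀ v ∈ T, u < v → χ u v ∈ Ico lo hi)
    (hT : 2 ^ (2 ^ (s + 2) * (s + 1) * l) ≤ #T) :
    ∃ S ⊆ T, #S = s ∧ NonIncSet χ (Ico lo hi) S := by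
  by_contra! hfree
  have hcard_lt := (clearable_of_nonIncFree (e := 2) hlohi hcard hfree).card_lt fun T' hT' =>
    colorDense_two_of_forall_mem fun u hu v hv => hcol u (hT' hu) v (hT' hv)
  have hbudget : clearingBudget l s 2 + 1 ≤ 2 ^ (s + 2) * (s + 1) * l := calc
    clearingBudget l s 2 + 1 ≤ clearingBudget l s 2 + 2 * 2 * l := by omega
    _ ≤ 2 ^ s * (2 * 2 + 4 * s) * l := clearingBudget_add_le hl
    _ = 2 ^ (s + 2) * (s + 1) * l := by ring
  refine hT.not_gt (hcard_lt.trans_le ?_)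
  rw [← pow_succ']
  exact Nat.pow_le_pow_right two_pos hbudget

theorem f_s_bound_general (s n N : ℕ) (hn : 2 ≤ n) (hN : n ^ (2 ^ (s + 3) * (s + 1)) ≤ N)
    (χ : ℕ → ℕ → ℕ) (hχ : ∀ u ∈ Icc 1 N, ∀ v ∈ Icc 1 N, u < v → χ u v ∈ Icc 1 n) :
    ∃ S ⊆ Icc 1 N, #S = s ∧
      ∀ u ∈ S, ∀ v ∈ S, ∀ w ∈ S, u < v → v < w → NonIncTriple χ u v w := by
  have hlog : 2 ^ (Nat.log 2 n + 1) ≤ n ^ 2 := calc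
    2 ^ (Nat.log 2 n + 1) = 2 ^ Nat.log 2 n * 2 := pow_succ _ _
    _ ≤ n * n := Nat.mul_le_mul (Nat.pow_log_le_self 2 (by omega)) hn
    _ = n ^ 2 := (sq n).symm
  have hcard : 2 ^ (2 ^ (s + 2) * (s + 1) * (Nat.log 2 n + 1)) ≤ #(Icc 1 N) := calc
    2 ^ (2 ^ (s + 2) * (s + 1) * (Nat.log 2 n + 1))
        = (2 ^ (Nat.log 2 n + 1)) ^ (2 ^ (s + 2) * (s + 1)) := by rw [← pow_mul, mul_comm]
    _ ≤ (n ^ 2) ^ (2 ^ (s + 2) * (s + 1)) := by gcongr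
    _ = n ^ (2 ^ (s + 3) * (s + 1)) := by rw [← pow_mul]; ring
    _ ≤ #(Icc 1 N) := by simpa using hN
  obtain ⟨S, hS, hSs, hinc⟩ := exists_nonIncSet (lo := 1) (hi := n + 1) (Nat.succ_pos _)
    (by omega) (by simpa using Nat.lt_pow_succ_log_self one_lt_two n) hχ hcard
  exact ⟨S, hS, hSs, hinc.nonIncTriple⟩

lemma two_pow_mul_succ_le_five_pow_mul_factorial {s : ℕ} (hs : 3 ≤ s) :
    2 ^ (s + 3) * (s + 1) ≤ 5 ^ s * s.factorial := by
  induction s, hs using Nat.le_induction with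
  | base => decide
  | succ s hs ih => calc
      2 ^ (s + 1 + 3) * (s + 1 + 1) = 2 ^ (s + 3) * (2 * (s + 2)) := by ring
      _ ≤ 2 ^ (s + 3) * (5 * (s + 1) * (s + 1)) := Nat.mul_le_mul_left _ (by nlinarith)
      _ = 5 * (s + 1) * (2 ^ (s + 3) * (s + 1)) := by ring
      _ ≤ 5 * (s + 1) * (5 ^ s * s.factorial) := by gcongr
      _ = 5 ^ (s + 1) * (s + 1).factorial := by rw [Nat.factorial_succ]; ring

lemma pow_le_two_rpow_logb {s n : ℕ} (hs : 3 ≤ s) (hn : 2 ≤ n) :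
    (n : ℝ) ^ (2 ^ (s + 3) * (s + 1)) ≤
      (2 : ℝ) ^ ((5 : ℝ) ^ s * (Nat.factorial s) * (Real.logb 2 n) ^ (s - 2)) := by
  have hn' : (2 : ℝ) ≤ n := by exact_mod_cast hn
  have hlog : 1 ≤ Real.logb 2 n := by
    rwa [Real.le_logb_iff_rpow_le one_lt_two (by positivity), Real.rpow_one]
  have hcoeff : (2 : ℝ) ^ (s + 3) * (s + 1) ≤ 5 ^ s * s.factorial := by
    exact_mod_cast two_pow_mul_succ_le_five_pow_mul_factorial hs
  calc (n : ℝ) ^ (2 ^ (s + 3) * (s + 1))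
      = 2 ^ (Real.logb 2 n * (2 ^ (s + 3) * (s + 1) : ℕ)) := by
        rw [Real.rpow_mul two_pos.le, Real.rpow_logb two_pos (by norm_num) (by positivity),
          Real.rpow_natCast]
    _ ≤ _ := by
      refine Real.rpow_le_rpow_of_exponent_le one_le_two ?_
      push_cast
      rw [mul_comm]
      gcongr
      exact le_self_pow₀ hlog (by omega)

/-- `f(s; n) ≤ 2^{5^s s! (log n)^{s-2}}` for `s ≥ 3`, `n ≥ 2`: every coloring of the
pairs of `[N]` with colors `{1, ..., n}`, where `N ≥ 2^{5^s s! (log₂ n)^{s-2}}`,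
contains a non-increasing set of size `s`. -/
theorem f_s_bound (s n N : ℕ) (hs : 3 ≤ s) (hn : 2 ≤ n)
    (hN : (2 : ℝ) ^ ((5 : ℝ) ^ s * (Nat.factorial s) * (Real.logb 2 n) ^ (s - 2)) ≤ N)
    (χ : ℕ → ℕ → ℕ) (hχ : ∀ u v, χ u v ∈ Finset.Icc 1 n) :
    ∃ S : Finset ℕ, S ⊆ Finset.Icc 1 N ∧ S.card = s ∧
      ∀ u ∈ S, ∀ v ∈ S, ∀ w ∈ S, u < v → v < w → NonIncTriple χ u v w :=
  f_s_bound_general s n N hn (by exact_mod_cast (pow_le_two_rpow_logb hs hn).trans hN) χ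
    fun u _ v _ _ => hχ u v
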